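/- Let γ > 0, 1 < α < 2, p > 1, a > 0, b > 0. Suppose w ∈ C¹([0,∞)), w ≢ 0, the function t ↦ ₀I_t^{2−α}(w(s) − w'(0)s − w(0)) is in AC²([0,T]) for every T > 0, and for almost every t ≥ 0 one has (₀D_t^α w)(t) + a·w(t) ≥ b·(₀I_t^γ (|w|^p))(t). Then liminf_{t→+∞} |w(t)| = 0, and liminf_{t→+∞} t^{min{(α+γ−1)/p, γ/(p−1)}}·|w(t)| < +∞. -/

import Mathlib

open MeasureTheory Filter

/-- Riemann–Liouville fractional integral of order `σ` based at `0`: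
`(₀I_t^σ f)(t) = (1/Γ(σ)) ∫₀ᵗ (t−s)^{σ−1} f(s) ds`. -/
noncomputable def rlInt (σ : ℝ) (f : ℝ → ℝ) (t : ℝ) : ℝ :=
  (1 / Real.Gamma σ) * ∫ s in (0:ℝ)..t, (t - s) ^ (σ - 1) * f s

/-- The function whose second derivative is the (left) Caputo derivative of order `α ∈ (1,2]`:
for `α < 2` it is `₀I_t^{2−α}(w(s) − w'(0)·s − w(0))`, and for `α = 2` it is `w` itself. -/
noncomputable def capKernel (α : ℝ) (w : ℝ → ℝ) : ℝ → ℝ :=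
  if α = 2 then w else rlInt (2 - α) (fun s => w s - deriv w 0 * s - w 0)

/-- Left Caputo fractional derivative of order `α ∈ (1,2]`:
`(₀D_t^α w)(t) = (d²/dt²)[ ₀I_t^{2−α}(w(s) − w'(0)s − w(0)) ](t)` (second derivative of `w` when `α = 2`). -/
noncomputable def caputoD (α : ℝ) (w : ℝ → ℝ) : ℝ → ℝ :=
  deriv (deriv (capKernel α w))

/-- `g ∈ AC²([0,T])`: `g` is differentiable on `[0,T]`, its second derivative is integrable,
and `g'` is the integral of `g''` (i.e. `g'` is absolutely continuous). -/
def AC2On (g : ℝ → ℝ) (T : ℝ) : Prop :=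
  (∀ t ∈ Set.Icc (0:ℝ) T, DifferentiableAt ℝ g t) ∧
  IntervalIntegrable (deriv (deriv g)) volume 0 T ∧
  ∀ t ∈ Set.Icc (0:ℝ) T, deriv g t = deriv g 0 + ∫ s in (0:ℝ)..t, deriv (deriv g) s

/-!
Because fractional integrals form a semigroup, applying `₀I^{m+2}` to the inequality
`₀D^α w + a w ≥ b ₀I^γ |w|^p` — which amounts to testing it against `(1 - t/T)^{m+1}` on `[0, T]` —
absorbs the two derivatives and leaves only fractional integrals of `w` and `|w|^p` together with
a polynomial in `T` coming from the initial data. For the averages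
`Y = ∫₀¹ (1 - u)^{m+1-α} |w(T u)| du` and `m` large enough, Jensen's inequality turns this into

  `B T^γ Y^p ≤ A Y + C T^{1-α}`  for all `T ≥ 1`.

With `κ = min ((α+γ-1)/p) (γ/(p-1))`, multiplying by `T^{κp-γ}` bounds `y = T^κ Y` through
`B y^p ≤ A y + C`, and `p > 1`. Hence `t^κ |w(t)|` cannot eventually stay above a large constant,
which is the second claim; the first one follows from it since `κ > 0`.
-/

section RiemannLiouville

open Set
open scoped Convolution Topology

variable {σ μ ν t T : ℝ} {f g : ℝ → ℝ}

lemma intervalIntegrable_sub_rpow_mul (hσ : 0 < σ) (ht : 0 ≤ t) (hf : ContinuousOn f (Ici 0)) :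
    IntervalIntegrable (fun s => (t - s) ^ (σ - 1) * f s) volume 0 t := by
  have hkernel : IntervalIntegrable (fun s => (t - s) ^ (σ - 1)) volume 0 t := by
    simpa using (intervalIntegral.intervalIntegrable_rpow' (a := t) (b := 0)
      (by linarith : -1 < σ - 1)).comp_sub_left t
  refine hkernel.mul_continuousOn (hf.mono ?_)
  rw [uIcc_of_le ht]
  exact Icc_subset_Ici_self

lemma rlInt_zero_right (σ : ℝ) (f : ℝ → ℝ) : rlInt σ f 0 = 0 := by
  simp [rlInt]

lemma rlInt_one_left (f : ℝ → ℝ) (t : ℝ) : rlInt 1 f t = ∫ s in (0 : ℝ)..t, f s := by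
  simp [rlInt]

lemma rlInt_const_mul (σ c : ℝ) (f : ℝ → ℝ) (t : ℝ) :
    rlInt σ (fun s => c * f s) t = c * rlInt σ f t := by
  simp only [rlInt, mul_left_comm _ c, intervalIntegral.integral_const_mul]

lemma rlInt_add (hσ : 0 < σ) (ht : 0 ≤ t) (hf : ContinuousOn f (Ici 0))
    (hg : ContinuousOn g (Ici 0)) :
    rlInt σ (fun s => f s + g s) t = rlInt σ f t + rlInt σ g t := by
  simp only [rlInt, mul_add]
  rw [intervalIntegral.integral_add (intervalIntegrable_sub_rpow_mul hσ ht hf)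
    (intervalIntegrable_sub_rpow_mul hσ ht hg), mul_add]

lemma rlInt_mono (hσ : 0 < σ) (ht : 0 ≤ t) (hf : ContinuousOn f (Ici 0))
    (hg : ContinuousOn g (Ici 0)) (hfg : ∀ s ∈ Icc 0 t, f s ≤ g s) :
    rlInt σ f t ≤ rlInt σ g t := by
  refine mul_le_mul_of_nonneg_left ?_ (one_div_nonneg.2 (Real.Gamma_pos_of_pos hσ).le)
  refine intervalIntegral.integral_mono_on ht (intervalIntegrable_sub_rpow_mul hσ ht hf)
    (intervalIntegrable_sub_rpow_mul hσ ht hg) fun s hs => ?_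
  exact mul_le_mul_of_nonneg_left (hfg s hs) (Real.rpow_nonneg (sub_nonneg.2 hs.2) _)

lemma integral_sub_rpow_mul_rpow (hμ : 0 < μ) (hν : 0 < ν) (ht : 0 < t) :
    ∫ s in (0 : ℝ)..t, (t - s) ^ (μ - 1) * s ^ (ν - 1) =
      t ^ (μ + ν - 1) * ProbabilityTheory.beta μ ν := by
  have hbeta : (ProbabilityTheory.beta μ ν : ℂ) = Complex.betaIntegral ν μ := by
    rw [Complex.betaIntegral_eq_Gamma_mul_div _ _ (by simpa) (by simpa), ProbabilityTheory.beta,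
      ← Complex.ofReal_add, Complex.Gamma_ofReal, Complex.Gamma_ofReal, Complex.Gamma_ofReal,
      add_comm ν μ]
    push_cast
    ring
  have hscaled := Complex.betaIntegral_scaled ν μ ht
  rw [← hbeta] at hscaled
  rw [← Complex.ofReal_inj, ← intervalIntegral.integral_ofReal]
  rw [show ((t ^ (μ + ν - 1) * ProbabilityTheory.beta μ ν : ℝ) : ℂ) =
    (t : ℂ) ^ ((ν : ℂ) + μ - 1) * ProbabilityTheory.beta μ ν by
      rw [Complex.ofReal_mul, Complex.ofReal_cpow ht.le]; push_cast; rw [add_comm (μ : ℂ)],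
    ← hscaled]
  refine intervalIntegral.integral_congr fun s hs => ?_
  rw [uIcc_of_le ht.le] at hs
  simp only [Complex.ofReal_mul, Complex.ofReal_cpow hs.1, Complex.ofReal_cpow (sub_nonneg.2 hs.2)]
  push_cast
  ring

lemma intervalIntegrable_sub_rpow_mul_rpow (hμ : 0 < μ) (hν : 0 < ν) (ht : 0 < t) :
    IntervalIntegrable (fun s => (t - s) ^ (μ - 1) * s ^ (ν - 1)) volume 0 t := by
  refine intervalIntegral.intervalIntegrable_of_integral_ne_zero ?_
  rw [integral_sub_rpow_mul_rpow hμ hν ht]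
  exact (mul_pos (Real.rpow_pos_of_pos ht _) (ProbabilityTheory.beta_pos hμ hν)).ne'

lemma rlInt_rpow (hμ : 0 < μ) (hν : 0 < ν) (ht : 0 < t) :
    rlInt μ (fun s => s ^ (ν - 1) / Real.Gamma ν) t = t ^ (μ + ν - 1) / Real.Gamma (μ + ν) := by
  have hΓμ := (Real.Gamma_pos_of_pos hμ).ne'
  have hΓν := (Real.Gamma_pos_of_pos hν).ne'
  simp only [rlInt, ← mul_div_assoc, intervalIntegral.integral_div,
    integral_sub_rpow_mul_rpow hμ hν ht, ProbabilityTheory.beta]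
  field_simp

/-- The Riemann–Liouville kernel `x₊ ^ (σ - 1) / Γ(σ)`, convolution with which is the fractional
integral of order `σ`. -/
noncomputable def rlKernel (σ : ℝ) : ℝ → ℝ :=
  (Ioi 0).indicator fun x => x ^ (σ - 1) / Real.Gamma σ

lemma measurable_rlKernel (σ : ℝ) : Measurable (rlKernel σ) :=
  ((measurable_id.pow_const _).div_const _).indicator measurableSet_Ioi

lemma rlKernel_nonneg (hσ : 0 < σ) (x : ℝ) : 0 ≤ rlKernel σ x :=
  indicator_nonneg (fun _ hx => div_nonneg (Real.rpow_nonneg (le_of_lt hx) _)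
    (Real.Gamma_pos_of_pos hσ).le) x

lemma indicator_rlInt (σ : ℝ) (f : ℝ → ℝ) :
    (Ioi 0).indicator (rlInt σ f) =
      (Ioi 0).indicator f ⋆[ContinuousLinearMap.mul ℝ ℝ] rlKernel σ := by
  rw [rlKernel, ← posConvolution_eq_convolution_indicator (ν := volume), posConvolution]
  congr 1
  ext t
  rw [rlInt, ← intervalIntegral.integral_const_mul]
  refine intervalIntegral.integral_congr fun s _ => ?_
  simp only [ContinuousLinearMap.mul_apply']
  ring

lemma rlKernel_convolution_rlKernel (hμ : 0 < μ) (hν : 0 < ν) :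
    rlKernel ν ⋆[ContinuousLinearMap.mul ℝ ℝ] rlKernel μ = rlKernel (μ + ν) := by
  nth_rw 1 [rlKernel]
  rw [← indicator_rlInt]
  exact indicator_congr fun t ht => rlInt_rpow hμ hν ht

lemma convolutionExistsAt_indicator_rlKernel
    (hf : 0 < t → IntervalIntegrable (fun s => (t - s) ^ (σ - 1) * f s) volume 0 t) :
    ConvolutionExistsAt ((Ioi 0).indicator f) (rlKernel σ) t (ContinuousLinearMap.mul ℝ ℝ) := by
  have hsupport : (fun s => (Ioi 0).indicator f s * rlKernel σ (t - s)) =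
      (Ioo 0 t).indicator fun s => (t - s) ^ (σ - 1) * f s / Real.Gamma σ := by
    ext s
    by_cases hs : 0 < s <;> by_cases hst : s < t <;>
      simp [rlKernel, indicator, hs, hst, mul_comm, mul_div_assoc]
  rw [ConvolutionExistsAt]
  simp only [ContinuousLinearMap.mul_apply']
  rw [hsupport, integrable_indicator_iff measurableSet_Ioo]
  rcases le_or_gt t 0 with ht | ht
  · simp [Ioo_eq_empty_of_le ht]
  · rw [← intervalIntegrable_iff_integrableOn_Ioo_of_le ht.le]
    exact (hf ht).div_const _

lemma convolutionExistsAt_rlKernel_rlKernel (hμ : 0 < μ) (hν : 0 < ν) (t : ℝ) :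
    ConvolutionExistsAt (rlKernel ν) (rlKernel μ) t (ContinuousLinearMap.mul ℝ ℝ) := by
  refine convolutionExistsAt_indicator_rlKernel fun ht => ?_
  simp only [← mul_div_assoc]
  exact (intervalIntegrable_sub_rpow_mul_rpow hμ hν ht).div_const _

/-- Read off from the associativity of convolution. -/
lemma rlInt_rlInt (hμ : 0 < μ) (hν : 0 < ν) (ht : 0 ≤ t) (hf : ContinuousOn f (Ici 0)) :
    rlInt μ (rlInt ν f) t = rlInt (μ + ν) f t := by
  rcases ht.eq_or_lt with rfl | ht
  · simp only [rlInt_zero_right]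
  have hnorm {σ : ℝ} (hσ : 0 < σ) : (fun x => ‖rlKernel σ x‖) = rlKernel σ :=
    funext fun x => Real.norm_of_nonneg (rlKernel_nonneg hσ x)
  have hexists {σ : ℝ} {f : ℝ → ℝ} (hσ : 0 < σ) (hf : ContinuousOn f (Ici 0)) (x : ℝ) :
      ConvolutionExistsAt ((Ioi 0).indicator f) (rlKernel σ) x (ContinuousLinearMap.mul ℝ ℝ) :=
    convolutionExistsAt_indicator_rlKernel fun hx => intervalIntegrable_sub_rpow_mul hσ hx.le hf
  have hf_meas : AEStronglyMeasurable ((Ioi 0).indicator f) :=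
    (aestronglyMeasurable_indicator_iff measurableSet_Ioi).2
      ((hf.mono Ioi_subset_Ici_self).aestronglyMeasurable measurableSet_Ioi)
  have hassoc : (((Ioi 0).indicator f ⋆[ContinuousLinearMap.mul ℝ ℝ] rlKernel ν)
        ⋆[ContinuousLinearMap.mul ℝ ℝ] rlKernel μ) t =
      ((Ioi 0).indicator f ⋆[ContinuousLinearMap.mul ℝ ℝ]
        (rlKernel ν ⋆[ContinuousLinearMap.mul ℝ ℝ] rlKernel μ)) t := by
    refine convolution_assoc _ _ _ _ mul_assoc hf_meas
      (measurable_rlKernel ν).aestronglyMeasurable (measurable_rlKernel μ).aestronglyMeasurable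
      (Eventually.of_forall (hexists hν hf)) ?_ ?_ <;> simp only [hnorm hμ, hnorm hν]
    · exact Eventually.of_forall (convolutionExistsAt_rlKernel_rlKernel hμ hν)
    · simp only [rlKernel_convolution_rlKernel hμ hν, norm_indicator_eq_indicator_norm]
      exact hexists (add_pos hμ hν) hf.norm t
  simpa only [rlKernel_convolution_rlKernel hμ hν, ← indicator_rlInt,
    indicator_of_mem (mem_Ioi.2 ht)] using hassoc

lemma rlInt_const (hσ : 0 < σ) (c : ℝ) (ht : 0 ≤ t) :
    rlInt σ (fun _ => c) t = t ^ σ / Real.Gamma (σ + 1) * c := by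
  rcases ht.eq_or_lt with rfl | ht
  · simp [rlInt_zero_right, Real.zero_rpow hσ.ne']
  have h := rlInt_rpow hσ one_pos ht
  simp only [sub_self, Real.rpow_zero, Real.Gamma_one, div_one, add_sub_cancel_right] at h
  simpa only [mul_one, h, mul_comm] using rlInt_const_mul σ c (fun _ => 1) t

lemma rlInt_le_add_of_forall_le_add {c : ℝ} (hσ : 0 < σ) (ht : 0 ≤ t)
    (hf : ContinuousOn f (Ici 0)) (hg : ContinuousOn g (Ici 0))
    (hfg : ∀ s ∈ Icc 0 t, f s ≤ g s + c) :
    rlInt σ f t ≤ rlInt σ g t + t ^ σ / Real.Gamma (σ + 1) * c := by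
  rw [← rlInt_const hσ c ht, ← rlInt_add hσ ht hg continuousOn_const]
  exact rlInt_mono hσ ht hf (hg.add continuousOn_const) hfg

/-- The fractional integral of order `σ` at time `T`, rescaled to the unit interval and without
its factor `T ^ σ / Γ(σ)`. It is an average of `f` over `[0, T]` whose weights do not depend on
`T`, up to the constant total weight `1 / σ`. -/
noncomputable def rlMean (σ : ℝ) (f : ℝ → ℝ) (T : ℝ) : ℝ :=
  ∫ u in (0 : ℝ)..1, (1 - u) ^ (σ - 1) * f (T * u)

lemma intervalIntegrable_one_sub_rpow_mul (hσ : 0 < σ) (hT : 0 ≤ T) (hf : ContinuousOn f (Ici 0)) :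
    IntervalIntegrable (fun u => (1 - u) ^ (σ - 1) * f (T * u)) volume 0 1 :=
  intervalIntegrable_sub_rpow_mul hσ zero_le_one <|
    hf.comp (by fun_prop) fun _ hu => mul_nonneg hT hu

lemma rlInt_eq_rlMean (hσ : 0 < σ) (hT : 0 ≤ T) (f : ℝ → ℝ) :
    rlInt σ f T = T ^ σ / Real.Gamma σ * rlMean σ f T := by
  rcases hT.eq_or_lt with rfl | hT
  · simp [rlInt_zero_right, Real.zero_rpow hσ.ne']
  have hsubst := intervalIntegral.mul_integral_comp_mul_left (a := 0) (b := 1)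
    (f := fun s => (T - s) ^ (σ - 1) * f s) (c := T)
  have hscale : ∫ u in (0 : ℝ)..1, (T - T * u) ^ (σ - 1) * f (T * u) =
      T ^ (σ - 1) * rlMean σ f T := by
    rw [rlMean, ← intervalIntegral.integral_const_mul]
    refine intervalIntegral.integral_congr fun u hu => ?_
    rw [uIcc_of_le zero_le_one] at hu
    rw [← mul_one_sub, Real.mul_rpow hT.le (sub_nonneg.2 hu.2), mul_assoc]
  rw [mul_zero, mul_one, hscale, ← mul_assoc, ← Real.rpow_one_add' hT.le (by simpa using hσ.ne'),
    add_sub_cancel] at hsubst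
  rw [rlInt, ← hsubst]
  ring

lemma continuousOn_rlMean (hσ : 0 < σ) (hf : ContinuousOn f (Ici 0)) :
    ContinuousOn (rlMean σ f) (Ici 0) := by
  intro T₀ hT₀
  obtain ⟨M, hM⟩ := isCompact_Icc.exists_bound_of_continuousOn
    (hf.mono (Icc_subset_Ici_self : Icc 0 (T₀ + 1) ⊆ _))
  have hbound := intervalIntegrable_sub_rpow_mul (f := fun _ => M) hσ zero_le_one
    continuousOn_const
  have hnear : ∀ᶠ T in 𝓝[Ici 0] T₀, 0 ≤ T ∧ T ≤ T₀ + 1 :=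
    eventually_mem_nhdsWithin.and
      (mem_nhdsWithin_of_mem_nhds (Iic_mem_nhds (lt_add_one T₀)))
  refine intervalIntegral.continuousWithinAt_of_dominated_interval ?_ ?_ hbound ?_
  · filter_upwards [hnear] with T hT
    rw [uIoc_of_le zero_le_one]
    exact (intervalIntegrable_one_sub_rpow_mul hσ hT.1 hf).1.aestronglyMeasurable
  · filter_upwards [hnear] with T hT
    refine Eventually.of_forall fun u hu => ?_
    rw [uIoc_of_le zero_le_one] at hu
    have hu1 : 0 ≤ (1 - u) ^ (σ - 1) := Real.rpow_nonneg (sub_nonneg.2 hu.2) _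
    rw [norm_mul, Real.norm_of_nonneg hu1]
    refine mul_le_mul_of_nonneg_left (hM _ ⟨mul_nonneg hT.1 hu.1.le, ?_⟩) hu1
    exact (mul_le_of_le_one_right hT.1 hu.2).trans hT.2
  · refine Eventually.of_forall fun u hu => ?_
    rw [uIoc_of_le zero_le_one] at hu
    have hcomp : ContinuousOn (fun T => f (T * u)) (Ici 0) :=
      hf.comp (by fun_prop) fun T hT => mul_nonneg hT hu.1.le
    exact (continuousOn_const.mul hcomp) T₀ hT₀

lemma continuousOn_rlInt (hσ : 0 < σ) (hf : ContinuousOn f (Ici 0)) :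
    ContinuousOn (rlInt σ f) (Ici 0) :=
  (((Real.continuous_rpow_const hσ.le).continuousOn.div_const _).mul
    (continuousOn_rlMean hσ hf)).congr fun _ hT => rlInt_eq_rlMean hσ hT f

lemma rlMean_nonneg (hT : 0 ≤ T) (hf₀ : ∀ s, 0 ≤ s → 0 ≤ f s) : 0 ≤ rlMean σ f T :=
  intervalIntegral.integral_nonneg zero_le_one fun _ hu =>
    mul_nonneg (Real.rpow_nonneg (sub_nonneg.2 hu.2) _) (hf₀ _ (mul_nonneg hT hu.1))

lemma rlMean_antitone (hμ : 0 < μ) (hμν : μ ≤ ν) (hT : 0 ≤ T) (hf : ContinuousOn f (Ici 0))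
    (hf₀ : ∀ s, 0 ≤ s → 0 ≤ f s) : rlMean ν f T ≤ rlMean μ f T := by
  refine intervalIntegral.integral_mono_on_of_le_Ioo zero_le_one
    (intervalIntegrable_one_sub_rpow_mul (hμ.trans_le hμν) hT hf)
    (intervalIntegrable_one_sub_rpow_mul hμ hT hf) fun u hu => ?_
  refine mul_le_mul_of_nonneg_right ?_ (hf₀ _ (mul_nonneg hT hu.1.le))
  exact Real.rpow_le_rpow_of_exponent_ge (sub_pos.2 hu.2) (by linarith [hu.1]) (by linarith)

/-- Jensen's inequality for the Lebesgue measure on `[0, 1]`. -/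
lemma rlMean_rpow_le {p : ℝ} (hp : 1 ≤ p) (hσ : 0 < σ) (hσp : 0 < p * (σ - 1) + 1) (hT : 0 ≤ T)
    (hf : ContinuousOn f (Ici 0)) (hf₀ : ∀ s, 0 ≤ s → 0 ≤ f s) :
    rlMean σ f T ^ p ≤ rlMean (p * (σ - 1) + 1) (fun s => f s ^ p) T := by
  have hp₀ : 0 ≤ p := by linarith
  set h : ℝ → ℝ := fun u => (1 - u) ^ (σ - 1) * f (T * u)
  have hprob : IsProbabilityMeasure (volume.restrict (Ioc (0 : ℝ) 1)) := ⟨by simp⟩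
  have hh₀ : ∀ u ∈ Ioc (0 : ℝ) 1, 0 ≤ h u := fun _ hu =>
    mul_nonneg (Real.rpow_nonneg (sub_nonneg.2 hu.2) _) (hf₀ _ (mul_nonneg hT hu.1.le))
  have hh_rpow : ∀ u ∈ Ioc (0 : ℝ) 1,
      h u ^ p = (1 - u) ^ (p * (σ - 1) + 1 - 1) * f (T * u) ^ p := fun u hu => by
    have hu1 : 0 ≤ 1 - u := sub_nonneg.2 hu.2
    rw [Real.mul_rpow (Real.rpow_nonneg hu1 _) (hf₀ _ (mul_nonneg hT hu.1.le)),
      ← Real.rpow_mul hu1, add_sub_cancel_right, mul_comm p]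
  have hint := intervalIntegrable_one_sub_rpow_mul hσp hT
    (hf.rpow_const fun _ _ => Or.inr hp₀)
  simp only [rlMean, intervalIntegral.integral_of_le zero_le_one]
  rw [← setIntegral_congr_fun measurableSet_Ioc hh_rpow]
  refine (convexOn_rpow hp).map_integral_le (Real.continuous_rpow_const hp₀).continuousOn
    isClosed_Ici ?_ (intervalIntegrable_one_sub_rpow_mul hσ hT hf).1 ?_
  · exact (ae_restrict_iff' measurableSet_Ioc).2 (Eventually.of_forall hh₀)
  · exact (integrableOn_congr_fun hh_rpow measurableSet_Ioc).2 hint.1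

lemma mul_le_rlMean_of_forall_le {c : ℝ} (hσ : 0 < σ) (hT : 0 ≤ T) (hf : ContinuousOn f (Ici 0))
    (hf₀ : ∀ s, 0 ≤ s → 0 ≤ f s) (hc : ∀ s ∈ Icc (T / 2) T, c ≤ f s) :
    (1 / 2) ^ σ / σ * c ≤ rlMean σ f T := by
  have hint := intervalIntegrable_one_sub_rpow_mul hσ hT hf
  have hconst := intervalIntegrable_one_sub_rpow_mul (T := T) hσ hT
    (continuousOn_const (c := c))
  have hsub : uIcc (1 / 2 : ℝ) 1 ⊆ uIcc 0 1 := by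
    rw [uIcc_of_le (by norm_num), uIcc_of_le (by norm_num)]
    exact Icc_subset_Icc_left (by norm_num)
  have hweight : ∫ u in (1 / 2 : ℝ)..1, (1 - u) ^ (σ - 1) = (1 / 2) ^ σ / σ := by
    rw [intervalIntegral.integral_comp_sub_left (fun u => u ^ (σ - 1)),
      integral_rpow (Or.inl (by linarith))]
    norm_num [Real.zero_rpow hσ.ne']
  calc (1 / 2) ^ σ / σ * c
      = ∫ u in (1 / 2 : ℝ)..1, (1 - u) ^ (σ - 1) * c := by
        rw [intervalIntegral.integral_mul_const, hweight]
    _ ≤ ∫ u in (1 / 2 : ℝ)..1, (1 - u) ^ (σ - 1) * f (T * u) := by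
        refine intervalIntegral.integral_mono_on (by norm_num) (hconst.mono_set hsub)
          (hint.mono_set hsub) fun u hu => ?_
        refine mul_le_mul_of_nonneg_left (hc _ ⟨?_, ?_⟩) (Real.rpow_nonneg (sub_nonneg.2 hu.2) _)
        · linarith [mul_le_mul_of_nonneg_left hu.1 hT]
        · exact mul_le_of_le_one_right hT hu.2
    _ ≤ rlMean σ f T := by
        refine intervalIntegral.integral_mono_interval (by norm_num) (by norm_num) le_rfl ?_ hint
        filter_upwards [ae_restrict_mem measurableSet_Ioc] with u hu
        exact mul_nonneg (Real.rpow_nonneg (sub_nonneg.2 hu.2) _)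
          (hf₀ _ (mul_nonneg hT hu.1.le))

end RiemannLiouville

section TestFunction

open Set

variable {α γ m a b t T : ℝ} {g h w P : ℝ → ℝ}

lemma AC2On.mono {s : ℝ} (hg : AC2On g T) (hs : 0 ≤ s) (hsT : s ≤ T) : AC2On g s := by
  have hsub : Icc 0 s ⊆ Icc 0 T := Icc_subset_Icc_right hsT
  refine ⟨fun r hr => hg.1 r (hsub hr), hg.2.1.mono_set ?_, fun r hr => hg.2.2 r (hsub hr)⟩
  rwa [uIcc_of_le hs, uIcc_of_le (hs.trans hsT)]

lemma le_deriv_of_ae_le_deriv_deriv (ht : 0 ≤ t) (hg : AC2On g t) (hh : ContinuousOn h (Ici 0))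
    (hle : ∀ᵐ s ∂volume.restrict (Ici 0), h s ≤ deriv (deriv g) s) :
    deriv g 0 + rlInt 1 h t ≤ deriv g t := by
  have hh_int : IntervalIntegrable h volume 0 t :=
    (hh.mono (uIcc_of_le ht ▸ Icc_subset_Ici_self)).intervalIntegrable
  have hmono := intervalIntegral.integral_mono_ae_restrict ht hh_int hg.2.1
    (ae_restrict_of_ae_restrict_of_subset Icc_subset_Ici_self hle)
  rw [rlInt_one_left, hg.2.2 t (right_mem_Icc.2 ht)]
  gcongr

lemma le_of_ae_le_deriv_deriv (ht : 0 ≤ t) (hg : AC2On g t) (hh : ContinuousOn h (Ici 0))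
    (hle : ∀ᵐ s ∂volume.restrict (Ici 0), h s ≤ deriv (deriv g) s) :
    g 0 + deriv g 0 * t + rlInt 2 h t ≤ g t := by
  have hg'_int : IntervalIntegrable (deriv g) volume 0 t := by
    have hprim := intervalIntegral.continuousOn_primitive_interval' hg.2.1 left_mem_uIcc
    rw [uIcc_of_le ht] at hprim
    refine ContinuousOn.intervalIntegrable ?_
    rw [uIcc_of_le ht]
    exact (continuousOn_const.add hprim).congr hg.2.2
  have hg_ftc : ∫ s in (0 : ℝ)..t, deriv g s = g t - g 0 :=
    intervalIntegral.integral_deriv_eq_sub (by rw [uIcc_of_le ht]; exact hg.1) hg'_int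
  have hh_int : IntervalIntegrable (rlInt 1 h) volume 0 t :=
    ((continuousOn_rlInt one_pos hh).mono
      (uIcc_of_le ht ▸ Icc_subset_Ici_self)).intervalIntegrable
  have hmono := intervalIntegral.integral_mono_on ht
    (intervalIntegrable_const.add hh_int) hg'_int
    fun s hs => le_deriv_of_ae_le_deriv_deriv hs.1 (hg.mono hs.1 hs.2) hh hle
  rw [hg_ftc, intervalIntegral.integral_add intervalIntegrable_const hh_int,
    intervalIntegral.integral_const, ← rlInt_one_left, rlInt_rlInt one_pos one_pos ht hh,
    one_add_one_eq_two] at hmono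
  simp only [sub_zero, smul_eq_mul] at hmono
  linarith

lemma neg_add_mul_le_abs_add_abs_mul {c₀ c₁ s : ℝ} (hT : 1 ≤ T) (hs : s ∈ Icc 0 T) :
    -(c₀ + c₁ * s) ≤ (|c₀| + |c₁|) * T := by
  have h₀ : -c₀ ≤ |c₀| * T := (neg_le_abs _).trans (le_mul_of_one_le_right (abs_nonneg _) hT)
  have h₁ : -c₁ * s ≤ |c₁| * T := mul_le_mul (neg_le_abs _) hs.2 hs.1 (abs_nonneg _)
  linarith

lemma rlInt_add_two_le_of_ae_le_deriv_deriv (hm : 0 < m) (hg : ∀ T > 0, AC2On g T)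
    (hh : ContinuousOn h (Ici 0))
    (hle : ∀ᵐ s ∂volume.restrict (Ici 0), h s ≤ deriv (deriv g) s) :
    ∃ C ≥ 0, ∀ T ≥ 1, rlInt (m + 2) h T ≤ rlInt m g T + C * T ^ (m + 1) := by
  refine ⟨(|g 0| + |deriv g 0|) / Real.Gamma (m + 1),
    div_nonneg (by positivity) (Real.Gamma_pos_of_pos (by linarith)).le, fun T hT => ?_⟩
  have hT₀ : 0 < T := by linarith
  have hg_cont : ContinuousOn g (Ici 0) := fun t ht =>
    ((hg (t + 1) (by linarith [mem_Ici.1 ht])).1 t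
      ⟨ht, by linarith⟩).continuousAt.continuousWithinAt
  have hbound : ∀ t ∈ Icc 0 T, rlInt 2 h t ≤ g t + (|g 0| + |deriv g 0|) * T := fun t ht => by
    linarith [neg_add_mul_le_abs_add_abs_mul (c₀ := g 0) (c₁ := deriv g 0) hT ht,
      le_of_ae_le_deriv_deriv ht.1 ((hg T hT₀).mono ht.1 ht.2) hh hle]
  calc rlInt (m + 2) h T = rlInt m (rlInt 2 h) T := (rlInt_rlInt hm two_pos hT₀.le hh).symm
    _ ≤ rlInt m g T + T ^ m / Real.Gamma (m + 1) * ((|g 0| + |deriv g 0|) * T) :=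
        rlInt_le_add_of_forall_le_add hm hT₀.le (continuousOn_rlInt two_pos hh) hg_cont hbound
    _ = _ := by rw [Real.rpow_add_one hT₀.ne']; ring

/-- The Caputo regularisation subtracts only a polynomial of degree one, whose fractional
integral of order `m + 2 - α` produces the power of `T`. -/
lemma rlInt_capKernel_le (hα : α ≤ 2) (hm : 0 < m) (hw : ContinuousOn w (Ici 0)) :
    ∃ C ≥ 0, ∀ T ≥ 1, rlInt m (capKernel α w) T ≤
      rlInt (m + 2 - α) (fun s => |w s|) T + C * T ^ (m + 3 - α) := by
  rcases hα.eq_or_lt with rfl | hα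
  · refine ⟨0, le_rfl, fun T hT => ?_⟩
    rw [capKernel, if_pos rfl, add_sub_cancel_right, zero_mul, add_zero]
    exact rlInt_mono hm (by linarith) hw hw.abs fun s _ => le_abs_self _
  set v : ℝ → ℝ := fun s => w s - deriv w 0 * s - w 0
  have hv : ContinuousOn v (Ici 0) := by fun_prop
  have hσ : 0 < m + 2 - α := by linarith
  refine ⟨(|w 0| + |deriv w 0|) / Real.Gamma (m + 2 - α + 1),
    div_nonneg (by positivity) (Real.Gamma_pos_of_pos (by linarith)).le, fun T hT => ?_⟩
  have hT₀ : 0 < T := by linarith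
  have hbound : ∀ s ∈ Icc 0 T, v s ≤ |w s| + (|w 0| + |deriv w 0|) * T := fun s hs => by
    linarith [neg_add_mul_le_abs_add_abs_mul (c₀ := w 0) (c₁ := deriv w 0) hT hs, le_abs_self (w s)]
  calc rlInt m (capKernel α w) T = rlInt m (rlInt (2 - α) v) T := by
        rw [capKernel, if_neg hα.ne]
    _ = rlInt (m + 2 - α) v T := by
        rw [rlInt_rlInt hm (by linarith) hT₀.le hv, add_sub_assoc]
    _ ≤ rlInt (m + 2 - α) (fun s => |w s|) T +
          T ^ (m + 2 - α) / Real.Gamma (m + 2 - α + 1) * ((|w 0| + |deriv w 0|) * T) :=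
        rlInt_le_add_of_forall_le_add hσ hT₀.le hv hw.abs hbound
    _ = _ := by
        rw [show m + 3 - α = m + 2 - α + 1 by ring, Real.rpow_add_one hT₀.ne']
        ring

lemma exists_mul_rlInt_le_of_caputoD_ge (hγ : 0 < γ) (hα : α ≤ 2) (hm : 0 < m)
    (hw : ContinuousOn w (Ici 0)) (hP : ContinuousOn P (Ici 0))
    (hAC : ∀ T > 0, AC2On (capKernel α w) T)
    (hineq : ∀ᵐ t ∂volume.restrict (Ici 0), caputoD α w t + a * w t ≥ b * rlInt γ P t) :
    ∃ C ≥ 0, ∀ T ≥ 1, b * rlInt (m + 2 + γ) P T ≤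
      rlInt (m + 2 - α) (fun s => |w s|) T + |a| * rlInt (m + 2) (fun s => |w s|) T +
        C * T ^ (m + 3 - α) := by
  have hm2 : 0 < m + 2 := by linarith
  have hIP : ContinuousOn (fun t => b * rlInt γ P t) (Ici 0) :=
    continuousOn_const.mul (continuousOn_rlInt hγ hP)
  set h : ℝ → ℝ := fun t => b * rlInt γ P t - a * w t
  have hh : ContinuousOn h (Ici 0) := hIP.sub (continuousOn_const.mul hw)
  obtain ⟨C₁, hC₁, hdata⟩ := rlInt_add_two_le_of_ae_le_deriv_deriv hm hAC hh
    (hineq.mono fun t ht => sub_le_iff_le_add.2 ht)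
  obtain ⟨C₂, hC₂, hcaputo⟩ := rlInt_capKernel_le hα hm hw
  refine ⟨C₁ + C₂, add_nonneg hC₁ hC₂, fun T hT => ?_⟩
  have hT₀ : 0 ≤ T := by linarith
  have haw : ContinuousOn (fun t => |a| * |w t|) (Ici 0) := continuousOn_const.mul hw.abs
  have hpow : T ^ (m + 1) ≤ T ^ (m + 3 - α) :=
    Real.rpow_le_rpow_of_exponent_le hT (by linarith)
  calc b * rlInt (m + 2 + γ) P T
      = rlInt (m + 2) (fun t => b * rlInt γ P t) T := by
        rw [rlInt_const_mul, rlInt_rlInt hm2 hγ hT₀ hP]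
    _ ≤ rlInt (m + 2) (fun t => h t + |a| * |w t|) T := by
        refine rlInt_mono hm2 hT₀ hIP (hh.add haw) fun t _ => ?_
        linarith [(le_abs_self (a * w t)).trans_eq (abs_mul a (w t))]
    _ = rlInt (m + 2) h T + |a| * rlInt (m + 2) (fun s => |w s|) T := by
        rw [rlInt_add hm2 hT₀ hh haw, rlInt_const_mul]
    _ ≤ (rlInt m (capKernel α w) T + C₁ * T ^ (m + 3 - α)) +
          |a| * rlInt (m + 2) (fun s => |w s|) T := by
        gcongr
        exact (hdata T hT).trans (by gcongr)
    _ ≤ _ := by linarith [hcaputo T hT]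

lemma exists_mul_rlMean_le_of_caputoD_ge (hγ : 0 < γ) (hα₀ : 0 ≤ α) (hα : α ≤ 2)
    (hm : 0 < m) (hb : 0 < b) (hw : ContinuousOn w (Ici 0)) (hP : ContinuousOn P (Ici 0))
    (hAC : ∀ T > 0, AC2On (capKernel α w) T)
    (hineq : ∀ᵐ t ∂volume.restrict (Ici 0), caputoD α w t + a * w t ≥ b * rlInt γ P t) :
    ∃ A ≥ 0, ∃ B > 0, ∃ C ≥ 0, ∀ T ≥ 1, B * T ^ γ * rlMean (m + 2 + γ) P T ≤
      A * rlMean (m + 2 - α) (fun s => |w s|) T + C * T ^ (1 - α) := by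
  obtain ⟨C, hC, htest⟩ := exists_mul_rlInt_le_of_caputoD_ge hγ hα hm hw hP hAC hineq
  have hσ : 0 < m + 2 - α := by linarith
  refine ⟨1 / Real.Gamma (m + 2 - α) + |a| / Real.Gamma (m + 2), by positivity,
    b / Real.Gamma (m + 2 + γ), by positivity, C, hC, fun T hT => ?_⟩
  have hT₀ : 0 < T := by linarith
  set Y := rlMean (m + 2 - α) (fun s => |w s|) T
  have hY : 0 ≤ Y := rlMean_nonneg hT₀.le fun _ _ => abs_nonneg _
  have hlower : rlMean (m + 2) (fun s => |w s|) T ≤ Y :=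
    rlMean_antitone hσ (by linarith) hT₀.le hw.abs fun _ _ => abs_nonneg _
  have hpow : T ^ (m + 2 - α) ≤ T ^ (m + 2) :=
    Real.rpow_le_rpow_of_exponent_le hT (by linarith)
  refine le_of_mul_le_mul_left ?_ (Real.rpow_pos_of_pos hT₀ (m + 2))
  calc T ^ (m + 2) * (b / Real.Gamma (m + 2 + γ) * T ^ γ * rlMean (m + 2 + γ) P T)
      = b * rlInt (m + 2 + γ) P T := by
        rw [rlInt_eq_rlMean (by linarith) hT₀.le, Real.rpow_add hT₀ (m + 2) γ]
        ring
    _ ≤ T ^ (m + 2 - α) / Real.Gamma (m + 2 - α) * Y +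
          |a| * (T ^ (m + 2) / Real.Gamma (m + 2) * rlMean (m + 2) (fun s => |w s|) T) +
          C * T ^ (m + 3 - α) := by
        rw [← rlInt_eq_rlMean hσ hT₀.le, ← rlInt_eq_rlMean (by linarith) hT₀.le]
        exact htest T hT
    _ ≤ T ^ (m + 2) / Real.Gamma (m + 2 - α) * Y +
          |a| * (T ^ (m + 2) / Real.Gamma (m + 2) * Y) + C * T ^ (m + 3 - α) := by gcongr
    _ = _ := by
        rw [show m + 3 - α = m + 2 + (1 - α) by ring, Real.rpow_add hT₀ (m + 2)]
        ring

end TestFunction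

section Decay

open Set
open scoped Topology

variable {α γ κ m p a b A B C : ℝ} {w : ℝ → ℝ}

lemma le_max_of_mul_rpow_le {y : ℝ} (hp : 1 < p) (hA : 0 ≤ A) (hB : 0 < B) (hC : 0 ≤ C)
    (hy : 0 ≤ y) (h : B * y ^ p ≤ A * y + C) :
    y ≤ max 1 (((A + C) / B) ^ (p - 1)⁻¹) := by
  refine le_max_iff.2 <| (le_total y 1).imp_right fun hy₁ => ?_
  have hy₀ : 0 < y := by linarith
  have hpow : y ^ (p - 1) ≤ (A + C) / B := by
    rw [le_div_iff₀' hB]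
    refine le_of_mul_le_mul_right ?_ hy₀
    calc B * y ^ (p - 1) * y = B * y ^ p := by
          rw [mul_assoc, ← Real.rpow_add_one hy₀.ne', sub_add_cancel]
      _ ≤ A * y + C := h
      _ ≤ (A + C) * y := by linarith [le_mul_of_one_le_right hC hy₁]
  exact (Real.le_rpow_inv_iff_of_pos hy (by positivity) (sub_pos.2 hp)).2 hpow

/-- After multiplication by `T ^ (κ * p - γ)` the estimate becomes `B y ^ p ≤ A y + C` for
`y = T ^ κ * Y`: the two bounds on `κ` make the powers of `T` on the right nonpositive. -/
lemma rpow_mul_le_of_mul_rpow_le {T Y : ℝ} (hp : 1 < p) (hκα : κ * p ≤ α + γ - 1)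
    (hκγ : κ * (p - 1) ≤ γ) (hA : 0 ≤ A) (hB : 0 < B) (hC : 0 ≤ C) (hT : 1 ≤ T) (hY : 0 ≤ Y)
    (h : B * T ^ γ * Y ^ p ≤ A * Y + C * T ^ (1 - α)) :
    T ^ κ * Y ≤ max 1 (((A + C) / B) ^ (p - 1)⁻¹) := by
  have hT₀ : 0 < T := by linarith
  refine le_max_of_mul_rpow_le hp hA hB hC (by positivity) ?_
  have hA_pow : T ^ (κ * p - γ) ≤ T ^ κ :=
    Real.rpow_le_rpow_of_exponent_le hT (by linarith)
  have hC_pow : T ^ (κ * p - γ + (1 - α)) ≤ 1 :=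
    Real.rpow_le_one_of_one_le_of_nonpos hT (by linarith)
  calc B * (T ^ κ * Y) ^ p = T ^ (κ * p - γ) * (B * T ^ γ * Y ^ p) := by
        rw [Real.mul_rpow (by positivity) hY, ← Real.rpow_mul hT₀.le, Real.rpow_sub hT₀]
        field_simp
    _ ≤ T ^ (κ * p - γ) * (A * Y + C * T ^ (1 - α)) := by gcongr
    _ = T ^ (κ * p - γ) * (A * Y) + C * T ^ (κ * p - γ + (1 - α)) := by
        rw [Real.rpow_add hT₀]
        ring
    _ ≤ T ^ κ * (A * Y) + C * 1 := by gcongr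
    _ = A * (T ^ κ * Y) + C := by ring

lemma frequently_rpow_mul_le_of_rpow_mul_rlMean_le {σ R : ℝ} {f : ℝ → ℝ} (hσ : 0 < σ)
    (hκ : 0 ≤ κ) (hf : ContinuousOn f (Ici 0)) (hf₀ : ∀ s, 0 ≤ s → 0 ≤ f s)
    (hR : ∀ T ≥ 1, T ^ κ * rlMean σ f T ≤ R) :
    ∃ M, ∃ᶠ t in atTop, t ^ κ * f t ≤ M := by
  by_contra! hlarge
  set c : ℝ := (1 / 2) ^ σ / σ
  have hc : 0 < c := by positivity
  set M : ℝ := (R + 1) / c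
  obtain ⟨t₀, ht₀⟩ := eventually_atTop.1 (hlarge M)
  set T : ℝ := max 1 (2 * t₀)
  have hT : 1 ≤ T := le_max_left _ _
  have ht₀T : 2 * t₀ ≤ T := le_max_right _ _
  have hT₀ : 0 < T := by linarith
  have hTκ : 0 < T ^ κ := Real.rpow_pos_of_pos hT₀ κ
  have hf_large : ∀ s ∈ Icc (T / 2) T, M / T ^ κ ≤ f s := fun s hs => by
    have hs₀ : 0 ≤ s := by linarith [hs.1]
    rw [div_le_iff₀' hTκ]
    calc M ≤ s ^ κ * f s := (ht₀ s (by linarith [hs.1])).le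
      _ ≤ T ^ κ * f s :=
        mul_le_mul_of_nonneg_right (Real.rpow_le_rpow hs₀ hs.2 hκ) (hf₀ s hs₀)
  have hmean : c * (M / T ^ κ) ≤ rlMean σ f T :=
    mul_le_rlMean_of_forall_le hσ hT₀.le hf hf₀ hf_large
  have : R + 1 ≤ R := calc
    R + 1 = T ^ κ * (c * (M / T ^ κ)) := by simp only [M]; field_simp
    _ ≤ T ^ κ * rlMean σ f T := by gcongr
    _ ≤ R := hR T hT
  linarith

lemma liminf_coe_abs_eq_zero_of_frequently {M : ℝ} (hκ : 0 < κ)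
    (h : ∃ᶠ t in atTop, t ^ κ * |w t| ≤ M) :
    liminf (fun t : ℝ => ((|w t| : ℝ) : EReal)) atTop = 0 := by
  refine le_antisymm (EReal.le_of_forall_lt_iff_le.1 fun ε hε => ?_)
    (le_liminf_of_le (by isBoundedDefault) (Eventually.of_forall fun t => ?_))
  · have hdecay : Tendsto (fun t : ℝ => M * t ^ (-κ)) atTop (𝓝 0) := by
      simpa using (tendsto_rpow_neg_atTop hκ).const_mul M
    refine liminf_le_of_frequently_le' ?_
    refine (h.and_eventually ((hdecay.eventually_le_const (EReal.coe_pos.1 hε)).and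
      (eventually_gt_atTop 0))).mono fun t ⟨hle, hsmall, ht⟩ => ?_
    rw [Real.rpow_neg ht.le, ← div_eq_mul_inv] at hsmall
    exact EReal.coe_le_coe ((le_div_iff₀' (Real.rpow_pos_of_pos ht κ)).2 hle |>.trans hsmall)
  · exact EReal.coe_nonneg.2 (abs_nonneg _)

lemma exists_rpow_mul_rlMean_abs_le_of_caputoD_ge (hγ : 0 < γ) (hα₀ : 0 ≤ α) (hα : α ≤ 2)
    (hp : 1 < p) (hb : 0 < b) (hκα : κ * p ≤ α + γ - 1) (hκγ : κ * (p - 1) ≤ γ) (hm : 0 < m)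
    (hmp : m + 1 + γ ≤ p * (m + 1 - α)) (hw : ContinuousOn w (Ici 0))
    (hAC : ∀ T > 0, AC2On (capKernel α w) T)
    (hineq : ∀ᵐ t ∂volume.restrict (Ici 0),
      caputoD α w t + a * w t ≥ b * rlInt γ (fun s => |w s| ^ p) t) :
    ∃ R, ∀ T ≥ 1, T ^ κ * rlMean (m + 2 - α) (fun s => |w s|) T ≤ R := by
  have hwp : ContinuousOn (fun s => |w s| ^ p) (Ici 0) :=
    hw.abs.rpow_const fun _ _ => Or.inr (by linarith)
  have hτ : m + 2 + γ ≤ p * (m + 2 - α - 1) + 1 := by linarith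
  obtain ⟨A, hA, B, hB, C, hC, htest⟩ :=
    exists_mul_rlMean_le_of_caputoD_ge hγ hα₀ hα hm hb hw hwp hAC hineq
  refine ⟨_, fun T hT => rpow_mul_le_of_mul_rpow_le hp hκα hκγ hA hB hC hT
    (rlMean_nonneg (by linarith) fun _ _ => abs_nonneg _) ((?_ : _ ≤ _).trans (htest T hT))⟩
  have hT₀ : 0 ≤ T := by linarith
  gcongr
  calc rlMean (m + 2 - α) (fun s => |w s|) T ^ p
      ≤ rlMean (p * (m + 2 - α - 1) + 1) (fun s => |w s| ^ p) T :=
        rlMean_rpow_le hp.le (by linarith) (by linarith) hT₀ hw.abs fun _ _ => abs_nonneg _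
    _ ≤ rlMean (m + 2 + γ) (fun s => |w s| ^ p) T :=
        rlMean_antitone (by linarith) hτ hT₀ hwp fun _ _ => by positivity

end Decay

theorem liminf_props_ineq_general
    (γ α p a b : ℝ) (w : ℝ → ℝ)
    (hγ : 0 < γ) (hα1 : 1 < α) (hα2 : α ≤ 2) (hp : 1 < p) (hb : 0 < b)
    (hw : ContinuousOn w (Set.Ici 0)) (_hw' : DifferentiableAt ℝ w 0)
    (hAC : ∀ T > (0 : ℝ), AC2On (capKernel α w) T)
    (hineq : ∀ᵐ t ∂(volume.restrict (Set.Ici (0 : ℝ))),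
      caputoD α w t + a * w t ≥ b * rlInt γ (fun s => |w s| ^ p) t) :
    liminf (fun t : ℝ => ((|w t| : ℝ) : EReal)) atTop = 0 ∧
    liminf (fun t : ℝ =>
      ((t ^ (min ((α + γ - 1) / p) (γ / (p - 1))) * |w t| : ℝ) : EReal)) atTop < ⊤ := by
  set κ : ℝ := min ((α + γ - 1) / p) (γ / (p - 1))
  have hp₁ : 0 < p - 1 := sub_pos.2 hp
  have hκ : 0 < κ := lt_min (div_pos (by linarith) (by linarith)) (div_pos hγ hp₁)
  have hκα : κ * p ≤ α + γ - 1 := (le_div_iff₀ (by linarith)).1 (min_le_left _ _)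
  have hκγ : κ * (p - 1) ≤ γ := (le_div_iff₀ hp₁).1 (min_le_right _ _)
  obtain ⟨m, hm, hmp⟩ : ∃ m > 0, m + 1 + γ ≤ p * (m + 1 - α) := by
    refine ⟨(γ + p * α) / (p - 1), by positivity, ?_⟩
    linarith [div_mul_cancel₀ (γ + p * α) hp₁.ne']
  obtain ⟨R, hR⟩ := exists_rpow_mul_rlMean_abs_le_of_caputoD_ge hγ (by linarith) hα2 hp hb
    hκα hκγ hm hmp hw hAC hineq
  obtain ⟨M, hM⟩ := frequently_rpow_mul_le_of_rpow_mul_rlMean_le (by linarith) hκ.le hw.abs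
    (fun _ _ => abs_nonneg _) hR
  exact ⟨liminf_coe_abs_eq_zero_of_frequently hκ hM,
    (liminf_le_of_frequently_le' (hM.mono fun _ ht => EReal.coe_le_coe ht)).trans_lt
      (EReal.coe_lt_top M)⟩

/-- Corollary 2.5 (ii): liminf |w| = 0 and liminf t^{min{(α+γ−1)/p, γ/(p−1)}} |w| < ∞. -/
theorem liminf_props_ineq
    (γ α p a b : ℝ) (w : ℝ → ℝ)
    (hγ : 0 < γ) (hα1 : 1 < α) (hα2 : α < 2) (hp : 1 < p) (ha : 0 < a) (hb : 0 < b)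
    (hw : ContDiff ℝ 1 w)
    (hw0 : ∃ t : ℝ, 0 ≤ t ∧ w t ≠ 0)
    (hAC : ∀ T > (0:ℝ), AC2On (capKernel α w) T)
    (hineq : ∀ᵐ t ∂(volume.restrict (Set.Ici (0:ℝ))),
      caputoD α w t + a * w t ≥ b * rlInt γ (fun s => |w s| ^ p) t)
    :
    liminf (fun t : ℝ => ((|w t| : ℝ) : EReal)) atTop = 0 ∧
    liminf (fun t : ℝ =>
      ((t ^ (min ((α + γ - 1) / p) (γ / (p - 1))) * |w t| : ℝ) : EReal)) atTop < ⊤ :=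
  liminf_props_ineq_general γ α p a b w hγ hα1 hα2.le hp hb hw.continuous.continuousOn
    (hw.differentiable one_ne_zero).differentiableAt hAC hineq
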